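/- Let M be an m×d matrix with nonnegative integer entries, each column of M nonzero, all row sums of M equal to some integer s ≥ 1, let P = {x ∈ R^d : x ≥ 0, Mx ≤ u} with u = (1,...,1)^t, and let k = s + 1. Then for every integer t ≥ k, the set of integer lattice points of t·P^o equals the set of integer lattice points of u + (t−k)·P; that is, (t·P^o) ∩ Z^d = (u + (t−k)P) ∩ Z^d. -/

import Mathlib

/-!
The interior of `P` is cut out by the strict inequalities `x > 0`, `M x < 1`
(`mem_interior_iff`), so `t P°` is given by `x > 0`, `M x < t`. At a lattice point `x` both
`x` and `M x` are integral, hence this says `x ≥ 1` and `M x ≤ t - 1 = (t - k) + s`. As every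
row of `M` sums to `s`, we have `M u = s u`, and the condition becomes `x - u ≥ 0`,
`M (x - u) ≤ t - k`, which says `x - u ∈ (t - k) P` (`mem_smul_iff`). The nonzero columns
matter only when `t = k`: they make `0` the only solution of `x ≥ 0`, `M x ≤ 0`.
-/

open Matrix Set Pointwise

/-- The set of integer lattice points in `ℝ^d`. -/
def latticePts (d : ℕ) : Set (Fin d → ℝ) := {x | ∀ i, ∃ z : ℤ, x i = (z : ℝ)}

/-- An integral (lattice) polytope: the convex hull of finitely many lattice points. -/
def IsIntegralPolytope {d : ℕ} (S : Set (Fin d → ℝ)) : Prop :=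
  ∃ V : Finset (Fin d → ℝ), (↑V : Set (Fin d → ℝ)) ⊆ latticePts d ∧
    S = convexHull ℝ (↑V : Set (Fin d → ℝ))

/-- The dual polytope `S* = {x | x ⬝ y ≤ 1 for all y ∈ S}`. -/
def dualPolytope {d : ℕ} (S : Set (Fin d → ℝ)) : Set (Fin d → ℝ) :=
  {x | ∀ y ∈ S, x ⬝ᵥ y ≤ 1}

/-- A polytope is reflexive if both it and its dual are integral polytopes. -/
def IsReflexive {d : ℕ} (S : Set (Fin d → ℝ)) : Prop :=
  IsIntegralPolytope S ∧ IsIntegralPolytope (dualPolytope S)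

/-- The Ehrhart counting function `L_S(t) = #(tS ∩ ℤ^d)`. -/
noncomputable def latticeCount {d : ℕ} (S : Set (Fin d → ℝ)) (t : ℕ) : ℕ :=
  (((t : ℝ) • S) ∩ latticePts d).ncard

/-- The Ehrhart series `Ehr_S(z) = 1 + ∑_{t ≥ 1} L_S(t) z^t`. -/
noncomputable def ehrhartSeries {d : ℕ} (S : Set (Fin d → ℝ)) : PowerSeries ℚ :=
  PowerSeries.mk fun t => if t = 0 then 1 else (latticeCount S t : ℚ)

/-- For the forward direction, a small multiple of the all-ones vector is added to and subtracted
from an interior point; the row sum `s ≥ 1` then makes the inequalities strict. -/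
lemma mem_interior_iff {m d s : ℕ} (hs : 1 ≤ s) (M : Matrix (Fin m) (Fin d) ℕ)
    (hrow : ∀ i, ∑ j, M i j = s) (x : Fin d → ℝ) :
    x ∈ interior {x : Fin d → ℝ | (∀ i, 0 ≤ x i) ∧ ∀ i, ∑ j, (M i j : ℝ) * x j ≤ 1} ↔
      (∀ i, 0 < x i) ∧ ∀ i, ∑ j, (M i j : ℝ) * x j < 1 := by
  constructor
  · intro hx
    have hc : Continuous fun e : ℝ => x + fun _ => e := by fun_prop
    have hn := hc.continuousAt.preimage_mem_nhds (x := 0)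
      (t := {x : Fin d → ℝ | (∀ i, 0 ≤ x i) ∧ ∀ i, ∑ j, (M i j : ℝ) * x j ≤ 1})
      (by
        have h0 : (x + fun _ => (0 : ℝ)) = x := by ext; simp
        rw [h0]
        exact mem_interior_iff_mem_nhds.1 hx)
    obtain ⟨e, he, hb⟩ := Metric.mem_nhds_iff.1 hn
    have h1 := hb (show e / 2 ∈ Metric.ball (0 : ℝ) e by
      simp only [Metric.mem_ball, Real.dist_eq, sub_zero]; rw [abs_of_pos] <;> linarith)
    have h2 := hb (show -(e / 2) ∈ Metric.ball (0 : ℝ) e by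
      simp only [Metric.mem_ball, Real.dist_eq, sub_zero]
      rw [abs_neg, abs_of_pos] <;> linarith)
    refine ⟨fun i => ?_, fun i => ?_⟩
    · have h := h2.1 i
      simp only [Pi.add_apply] at h
      linarith
    · have h := h1.2 i
      simp only [Pi.add_apply, mul_add, Finset.sum_add_distrib, ← Finset.sum_mul] at h
      have hr : ∑ j, (M i j : ℝ) = s := by exact_mod_cast hrow i
      have hs' : (1 : ℝ) ≤ s := by exact_mod_cast hs
      rw [hr] at h
      nlinarith
  · intro hx
    have ho : IsOpen {x : Fin d → ℝ | (∀ i, 0 < x i) ∧ ∀ i, ∑ j, (M i j : ℝ) * x j < 1} := by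
      simp only [Set.ofPred_and, Set.ofPred_forall]
      refine IsOpen.inter (isOpen_iInter_of_finite fun i => ?_)
        (isOpen_iInter_of_finite fun i => ?_)
      · exact isOpen_lt (by fun_prop) (by fun_prop)
      · exact isOpen_lt (by fun_prop) (by fun_prop)
    refine interior_maximal ?_ ho hx
    rintro y ⟨h0, h1⟩
    exact ⟨fun i => (h0 i).le, fun i => (h1 i).le⟩

/-- For `c = 0` this says that `x ≥ 0`, `M x ≤ 0` forces `x = 0`, which uses that no column
of `M` vanishes. -/
lemma mem_smul_iff {m d : ℕ} (M : Matrix (Fin m) (Fin d) ℕ)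
    (hcol : ∀ j, ∃ i, M i j ≠ 0) (c : ℝ) (hc : 0 ≤ c) (x : Fin d → ℝ) :
    x ∈ c • {x : Fin d → ℝ | (∀ i, 0 ≤ x i) ∧ ∀ i, ∑ j, (M i j : ℝ) * x j ≤ 1} ↔
      (∀ i, 0 ≤ x i) ∧ ∀ i, ∑ j, (M i j : ℝ) * x j ≤ c := by
  constructor
  · rintro ⟨y, hy, rfl⟩
    refine ⟨fun i => mul_nonneg hc (hy.1 i), fun i => ?_⟩
    simp only [Pi.smul_apply, smul_eq_mul, mul_left_comm _ c, ← Finset.mul_sum]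
    simpa using mul_le_mul_of_nonneg_left (hy.2 i) hc
  · rintro ⟨h0, h1⟩
    rcases hc.eq_or_lt with rfl | hc
    · refine ⟨0, by simp, ?_⟩
      ext j
      obtain ⟨i, hi⟩ := hcol j
      have hle : (M i j : ℝ) * x j ≤ ∑ j, (M i j : ℝ) * x j :=
        Finset.single_le_sum (f := fun j => (M i j : ℝ) * x j)
          (fun j _ => mul_nonneg (Nat.cast_nonneg _) (h0 j)) (Finset.mem_univ j)
      have hM : (0 : ℝ) < M i j := by exact_mod_cast Nat.pos_of_ne_zero hi
      have := h1 i
      have := h0 j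
      simp only [Pi.smul_apply, smul_eq_mul, zero_mul]
      nlinarith
    · rw [Set.mem_smul_set_iff_inv_smul_mem₀ hc.ne']
      refine ⟨fun i => mul_nonneg (inv_nonneg.2 hc.le) (h0 i), fun i => ?_⟩
      simp only [Pi.smul_apply, smul_eq_mul, mul_left_comm _ c⁻¹, ← Finset.mul_sum]
      rw [inv_mul_le_iff₀ hc, mul_one]
      exact h1 i

/-- For `t ≥ k = s + 1`, the lattice points of `t P°` are exactly the lattice points
of `u + (t - k) P`. -/
theorem interior_lattice_points_eq_translate (m d s : ℕ) (hs : 1 ≤ s)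
    (M : Matrix (Fin m) (Fin d) ℕ)
    (hcol : ∀ j, ∃ i, M i j ≠ 0)
    (hrow : ∀ i, ∑ j, M i j = s)
    (P : Set (Fin d → ℝ))
    (hP : P = {x : Fin d → ℝ | (∀ i, 0 ≤ x i) ∧ ∀ i, ∑ j, (M i j : ℝ) * x j ≤ 1}) :
    ∀ t : ℕ, s + 1 ≤ t →
      ((t : ℝ) • interior P) ∩ latticePts d =
      ((fun x : Fin d → ℝ => (fun _ => (1 : ℝ)) + x) ''
        (((t - (s + 1) : ℕ) : ℝ) • P)) ∩ latticePts d := by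
  intro t ht
  subst hP
  ext x
  simp only [Set.mem_inter_iff]
  refine and_congr_left fun hx => ?_
  choose z hz using hx
  obtain rfl : x = fun i => (z i : ℝ) := funext hz
  have ht0 : (0 : ℝ) < t := by
    have : 0 < t := by omega
    exact_mod_cast this
  have hr : ∀ i, ∑ j, (M i j : ℝ) = s := fun i => by exact_mod_cast hrow i
  have himg : ∀ S : Set (Fin d → ℝ),
      (fun i => (z i : ℝ)) ∈ (fun x : Fin d → ℝ => (fun _ => (1 : ℝ)) + x) '' S ↔
        (fun i => (z i : ℝ) - 1) ∈ S := by
    intro S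
    constructor
    · rintro ⟨y, hy, h⟩
      convert hy using 1
      ext i
      have := congrFun h i
      simp only [Pi.add_apply] at this
      linarith
    · intro h
      exact ⟨_, h, by ext i; simp⟩
  rw [himg, mem_smul_iff M hcol _ (Nat.cast_nonneg _),
    Set.mem_smul_set_iff_inv_smul_mem₀ ht0.ne', mem_interior_iff hs M hrow]
  refine and_congr (forall_congr' fun i => ?_) (forall_congr' fun i => ?_)
  · simp only [Pi.smul_apply, smul_eq_mul]
    rw [mul_pos_iff_of_pos_left (inv_pos.2 ht0), sub_nonneg]
    norm_cast
  · simp only [Pi.smul_apply, smul_eq_mul, mul_left_comm _ (t : ℝ)⁻¹, ← Finset.mul_sum,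
      mul_sub, Finset.sum_sub_distrib, mul_one, hr]
    rw [inv_mul_lt_iff₀ ht0, mul_one, Nat.cast_sub ht]
    -- Both sides compare the integer `∑ j, M i j * z j` with `t`.
    have hint : ∑ j, (M i j : ℝ) * (z j : ℝ) = ((∑ j, (M i j : ℤ) * z j : ℤ) : ℝ) := by
      push_cast
      rfl
    have hlt : ∑ j, (M i j : ℝ) * (z j : ℝ) < t ↔
        ∑ j, (M i j : ℝ) * (z j : ℝ) + 1 ≤ t := by
      rw [hint]
      exact_mod_cast Int.lt_iff_add_one_le
    rw [hlt]
    push_cast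
    constructor <;> intro h <;> linarith
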